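/- Let H be a complex Hilbert space, A and B positive bounded self-adjoint operators on H, P an orthogonal projection on H, α > 0, and c > 0. Assume that ‖(αI + A)^{1/2} ∘ (I − P)‖² ≤ 3α and ‖(αI + B) ∘ (αI + A)^{-1}‖ ≤ c. Then αI + P B P is invertible and ‖(αI + B) ∘ (αI + P B P)^{-1} ∘ P‖ ≤ 1 + (√3/2)·√c. -/

import Mathlib

open ContinuousLinearMap

/-!
Let `q = (α + pbp)⁻¹`. Since `q` commutes with `p`, the operator `(α + b)qp` is the sum of `p` and
its off-diagonal corner `(1 - p)b(qp)`. By the Cauchy–Schwarz inequality for the positive element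
`b`, the norm of the corner is at most `‖√b(1 - p)‖ ‖√b(qp)‖`. The second factor is
`‖√(pbp)q‖ ≤ 1 / (2√α)`, because `4αt ≤ (α + t)²`. For the first, squaring the bound
`‖(α + b)(α + a)⁻¹‖ ≤ c` gives `(α + b)² ≤ c²(α + a)²`, operator monotonicity of the square root
turns this into `b ≤ α + b ≤ c(α + a)`, and the hypothesis on `√(α + a)(1 - p)` applies.
-/

section NonUnital

open CFC (sqrt)

variable {R : Type*} [NonUnitalCStarAlgebra R] [PartialOrder R] [StarOrderedRing R]

lemma le_norm_smul_of_eq_mul {x y z : R} (hx : 0 ≤ x) (hy : 0 ≤ y) (h : x = z * y) :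
    x ≤ ‖z‖ • y := by
  have mul_self_le : x * x ≤ (‖z‖ • y) * (‖z‖ • y) := calc
    x * x = star x * x := by rw [hx.star_eq]
    _ = star y * (star z * z) * y := by simp only [h, star_mul, mul_assoc]
    _ ≤ ‖star z * z‖ • (star y * y) := CStarAlgebra.star_left_conjugate_le_norm_smul
    _ = (‖z‖ • y) * (‖z‖ • y) := by
      rw [CStarRing.norm_star_mul_self, hy.star_eq, smul_mul_smul_comm]
  simpa only [CFC.sqrt_mul_self x hx, CFC.sqrt_mul_self _ (smul_nonneg (norm_nonneg z) hy)]
    using CFC.sqrt_le_sqrt _ _ mul_self_le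

lemma star_sqrt_mul_mul_sqrt_mul {b : R} (hb : 0 ≤ b) (x y : R) :
    star (sqrt b * x) * (sqrt b * y) = star x * b * y := by
  rw [star_mul, (CFC.sqrt_nonneg b).star_eq, mul_assoc, ← mul_assoc (sqrt b),
    CFC.sqrt_mul_sqrt_self b hb, mul_assoc]

lemma norm_sqrt_mul_sq {b : R} (hb : 0 ≤ b) (x : R) :
    ‖sqrt b * x‖ ^ 2 = ‖star x * b * x‖ := by
  rw [sq, ← CStarRing.norm_star_mul_self, star_sqrt_mul_mul_sqrt_mul hb]

lemma norm_star_mul_mul_le {b : R} (hb : 0 ≤ b) (x y : R) :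
    ‖star x * b * y‖ ≤ ‖sqrt b * x‖ * ‖sqrt b * y‖ := by
  rw [← star_sqrt_mul_mul_sqrt_mul hb, ← norm_star (sqrt b * x)]
  exact norm_mul_le _ _

lemma norm_sqrt_mul_sq_le_of_le_smul {b d : R} {k : ℝ} (hb : 0 ≤ b) (hd : 0 ≤ d) (hk : 0 ≤ k)
    (h : b ≤ k • d) (x : R) : ‖sqrt b * x‖ ^ 2 ≤ k * ‖sqrt d * x‖ ^ 2 := calc
  ‖sqrt b * x‖ ^ 2 = ‖star x * b * x‖ := norm_sqrt_mul_sq hb x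
  _ ≤ ‖star x * (k • d) * x‖ :=
    CStarAlgebra.norm_le_norm_of_nonneg_of_le (star_left_conjugate_nonneg hb x)
      (star_left_conjugate_le_conjugate h x)
  _ = k * ‖sqrt d * x‖ ^ 2 := by
    rw [mul_smul_comm, smul_mul_assoc, norm_smul, Real.norm_of_nonneg hk, norm_sqrt_mul_sq hd]

end NonUnital

section Compression

open scoped Ring

lemma commute_inverse {M : Type*} [MonoidWithZero M] {a b : M} (h : Commute a b) :
    Commute a b⁻¹ʳ := by
  by_cases hb : IsUnit b
  · obtain ⟨u, rfl⟩ := hb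
    rw [Ring.inverse_unit]
    exact h.units_inv_right
  · rw [Ring.inverse_non_unit b hb]
    exact Commute.zero_right a

variable {k R : Type*} [CommSemiring k] [Ring R] [Algebra k R] {p : R}

lemma commute_inverse_smul_one_add_compression (hp : IsIdempotentElem p) (r : k) (b : R) :
    Commute p (r • 1 + p * b * p)⁻¹ʳ := by
  have commute_compression : Commute p (p * b * p) := by
    rw [commute_iff_eq, mul_assoc (p * b), hp.eq, ← mul_assoc, ← mul_assoc, hp.eq]
  exact commute_inverse (((Commute.one_right p).smul_right r).add_right commute_compression)

lemma smul_one_add_mul_inverse_compression_mul (hp : IsIdempotentElem p) {r : k} {b : R}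
    (h : IsUnit (r • 1 + p * b * p)) :
    (r • 1 + b) * ((r • 1 + p * b * p)⁻¹ʳ * p) =
      p + (1 - p) * b * ((r • 1 + p * b * p)⁻¹ʳ * p) := by
  set x := (r • 1 + p * b * p)⁻¹ʳ * p with hx
  have p_mul_x : p * x = x := by
    rw [hx, ← mul_assoc, (commute_inverse_smul_one_add_compression hp r b).eq, mul_assoc, hp.eq]
  have compression_mul_x : (r • 1 + p * b * p) * x = p := Ring.mul_inverse_cancel_left _ p h
  calc (r • 1 + b) * x = r • x + p * b * x + (1 - p) * b * x := by
        rw [add_mul, smul_one_mul, sub_mul, one_mul, sub_mul, add_assoc, add_sub_cancel]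
    _ = (r • 1 + p * b * p) * x + (1 - p) * b * x := by
        rw [add_mul, smul_one_mul, mul_assoc (p * b), p_mul_x]
    _ = p + (1 - p) * b * x := by rw [compression_mul_x]

end Compression

lemma four_mul_smul_le_smul_one_add_sq {R : Type*} [Ring R] [PartialOrder R] [StarRing R]
    [StarOrderedRing R] [Algebra ℝ R] [StarModule ℝ R] {t : R} (ht : IsSelfAdjoint t) (α : ℝ) :
    (4 * α) • t ≤ (α • 1 + t) ^ 2 := by
  have selfAdjoint : IsSelfAdjoint (α • 1 - t) := ((IsSelfAdjoint.all α).smul (.one R)).sub ht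
  have difference_eq : (α • 1 + t) ^ 2 - (4 * α) • t = (α • 1 - t) ^ 2 := by
    simp only [sq, add_mul, mul_add, sub_mul, mul_sub, smul_mul_assoc, mul_smul_comm, one_mul,
      mul_one]
    module
  rw [← sub_nonneg, difference_eq]
  exact selfAdjoint.sq_nonneg

section Unital

open CFC (sqrt)
open scoped Ring

variable {R : Type*} [CStarAlgebra R] [PartialOrder R] [StarOrderedRing R]
  {a b p t : R} {α : ℝ}

lemma isStrictlyPositive_smul_one_add (hα : 0 < α) (ht : 0 ≤ t) :
    IsStrictlyPositive (α • 1 + t) :=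
  (isStrictlyPositive_one.smul hα).add_nonneg ht

lemma norm_sqrt_mul_inverse_smul_one_add_sq_le (hα : 0 < α) (ht : 0 ≤ t) :
    ‖sqrt t * (α • 1 + t)⁻¹ʳ‖ ^ 2 ≤ 1 / (4 * α) := by
  have hpos := isStrictlyPositive_smul_one_add hα ht
  set q := (α • 1 + t)⁻¹ʳ
  have q_star : star q = q := hpos.isSelfAdjoint.ringInverse.star_eq
  have conjugate_le_one : (4 * α) • (star q * t * q) ≤ 1 := calc
    (4 * α) • (star q * t * q) = star q * ((4 * α) • t) * q := by
      rw [mul_smul_comm, smul_mul_assoc]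
    _ ≤ star q * (α • 1 + t) ^ 2 * q :=
      star_left_conjugate_le_conjugate (four_mul_smul_le_smul_one_add_sq ht.isSelfAdjoint α) q
    _ = 1 := by
      rw [q_star, sq, ← mul_assoc, Ring.inverse_mul_cancel _ hpos.isUnit, one_mul,
        Ring.mul_inverse_cancel _ hpos.isUnit]
  have conjugate_nonneg : 0 ≤ (4 * α) • (star q * t * q) :=
    smul_nonneg (by positivity) (star_left_conjugate_nonneg ht q)
  rw [norm_sqrt_mul_sq ht, le_div_iff₀' (by positivity)]
  simpa only [norm_smul, Real.norm_of_nonneg (by positivity : 0 ≤ 4 * α)] using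
    (CStarAlgebra.norm_le_one_iff_of_nonneg _ conjugate_nonneg).2 conjugate_le_one

lemma norm_sqrt_mul_inverse_smul_one_add_compression_mul_sq_le (hα : 0 < α) (hb : 0 ≤ b)
    (hp : IsStarProjection p) :
    ‖sqrt b * ((α • 1 + p * b * p)⁻¹ʳ * p)‖ ^ 2 ≤ 1 / (4 * α) := by
  have hpbp : 0 ≤ p * b * p := hp.isSelfAdjoint.conjugate_nonneg hb
  have q_comm := commute_inverse_smul_one_add_compression hp.isIdempotentElem α b
  calc ‖sqrt b * ((α • 1 + p * b * p)⁻¹ʳ * p)‖ ^ 2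
      = ‖sqrt (p * b * p) * (α • 1 + p * b * p)⁻¹ʳ‖ ^ 2 := by
        rw [norm_sqrt_mul_sq hb, norm_sqrt_mul_sq hpbp, ← q_comm.eq, star_mul,
          hp.isSelfAdjoint.star_eq]
        simp only [mul_assoc]
    _ ≤ 1 / (4 * α) := norm_sqrt_mul_inverse_smul_one_add_sq_le hα hpbp

lemma le_norm_mul_inverse_smul {x y : R} (hx : 0 ≤ x) (hy : IsStrictlyPositive y) :
    x ≤ ‖x * y⁻¹ʳ‖ • y :=
  le_norm_smul_of_eq_mul hx hy.nonneg (Ring.inverse_mul_cancel_right y x hy.isUnit).symm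

lemma norm_sqrt_mul_sq_le_norm_mul_inverse_mul (hα : 0 < α) (ha : 0 ≤ a) (hb : 0 ≤ b) (x : R) :
    ‖sqrt b * x‖ ^ 2 ≤
      ‖(α • 1 + b) * (α • 1 + a)⁻¹ʳ‖ * ‖sqrt (α • 1 + a) * x‖ ^ 2 := by
  have ha' := isStrictlyPositive_smul_one_add hα ha
  have hb' := isStrictlyPositive_smul_one_add hα hb
  refine norm_sqrt_mul_sq_le_of_le_smul hb ha'.nonneg (norm_nonneg _) ?_ x
  calc b ≤ α • 1 + b := le_add_of_nonneg_left (smul_nonneg hα.le zero_le_one)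
    _ ≤ _ := le_norm_mul_inverse_smul hb'.nonneg ha'

theorem stmt_18_general {κ c : ℝ} (ha : 0 ≤ a) (hb : 0 ≤ b) (hp : IsStarProjection p)
    (hα : 0 < α)
    (hκ : ‖sqrt (α • 1 + a) * (1 - p)‖ ^ 2 ≤ κ * α)
    (hc : ‖(α • 1 + b) * (α • 1 + a)⁻¹ʳ‖ ≤ c) :
    IsUnit (α • 1 + p * b * p) ∧
      ‖(α • 1 + b) * ((α • 1 + p * b * p)⁻¹ʳ * p)‖ ≤ 1 + √(κ * c) / 2 := by
  have isUnit_compression : IsUnit (α • 1 + p * b * p) :=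
    (isStrictlyPositive_smul_one_add hα (hp.isSelfAdjoint.conjugate_nonneg hb)).isUnit
  refine ⟨isUnit_compression, ?_⟩
  rw [smul_one_add_mul_inverse_compression_mul hp.isIdempotentElem isUnit_compression]
  set x := (α • 1 + p * b * p)⁻¹ʳ * p
  have c_nonneg : 0 ≤ c := (norm_nonneg _).trans hc
  have sqrt_mul_one_sub_le : ‖sqrt b * (1 - p)‖ ^ 2 ≤ c * (κ * α) :=
    (norm_sqrt_mul_sq_le_norm_mul_inverse_mul hα ha hb (1 - p)).trans (by gcongr)
  have sqrt_mul_x_le : ‖sqrt b * x‖ ^ 2 ≤ 1 / (4 * α) :=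
    norm_sqrt_mul_inverse_smul_one_add_compression_mul_sq_le hα hb hp
  have corner_sq_le : (2 * ‖(1 - p) * b * x‖) ^ 2 ≤ κ * c := calc
    (2 * ‖(1 - p) * b * x‖) ^ 2 ≤ (2 * (‖sqrt b * (1 - p)‖ * ‖sqrt b * x‖)) ^ 2 := by
      gcongr
      simpa only [hp.one_sub.isSelfAdjoint.star_eq] using norm_star_mul_mul_le hb (1 - p) x
    _ = 4 * (‖sqrt b * (1 - p)‖ ^ 2 * ‖sqrt b * x‖ ^ 2) := by ring
    _ ≤ 4 * (c * (κ * α) * (1 / (4 * α))) := by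
      gcongr
      exact (sq_nonneg _).trans sqrt_mul_one_sub_le
    _ = κ * c := by field_simp
  calc ‖p + (1 - p) * b * x‖ ≤ ‖p‖ + ‖(1 - p) * b * x‖ := norm_add_le _ _
    _ ≤ 1 + √(κ * c) / 2 :=
      add_le_add (hp.norm_le p) (by linarith [Real.le_sqrt_of_sq_le corner_sq_le])

end Unital

/-- The deterministic operator-theoretic content of Lemma 3.5 of the paper:
let `A`, `B` be positive bounded self-adjoint operators on a complex Hilbert
space, `P` an orthogonal projection, `α > 0` and `c > 0`. If
`‖(αI + A)^{1/2} (I − P)‖² ≤ 3α` (expressed via any positive square root `S` of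
`αI + A`) and `‖(αI + B)(αI + A)^{-1}‖ ≤ c` (expressed via any two-sided inverse
of `αI + A`), then `αI + P B P` is invertible and
`‖(αI + B)(αI + P B P)^{-1} P‖ ≤ 1 + (√3/2) √c`. -/
theorem stmt_18 {H : Type*} [NormedAddCommGroup H] [InnerProductSpace ℂ H] [CompleteSpace H]
    (A B : H →L[ℂ] H) (hA : A.IsPositive) (hB : B.IsPositive)
    (P : H →L[ℂ] H) (hP_sa : IsSelfAdjoint P) (hP_idem : P ∘L P = P)
    (α c : ℝ) (hα : 0 < α) (hc : 0 < c)
    (hyp1 : ∀ S : H →L[ℂ] H, S.IsPositive →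
      S ∘L S = (α : ℂ) • (1 : H →L[ℂ] H) + A →
      ‖S ∘L ((1 : H →L[ℂ] H) - P)‖ ^ 2 ≤ 3 * α)
    (hyp2 : ∀ Q : H →L[ℂ] H,
      Q ∘L ((α : ℂ) • (1 : H →L[ℂ] H) + A) = 1 →
      ((α : ℂ) • (1 : H →L[ℂ] H) + A) ∘L Q = 1 →
      ‖((α : ℂ) • (1 : H →L[ℂ] H) + B) ∘L Q‖ ≤ c) :
    IsUnit ((α : ℂ) • (1 : H →L[ℂ] H) + P ∘L B ∘L P) ∧
    ∀ Q : H →L[ℂ] H,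
      Q ∘L ((α : ℂ) • (1 : H →L[ℂ] H) + P ∘L B ∘L P) = 1 →
      ((α : ℂ) • (1 : H →L[ℂ] H) + P ∘L B ∘L P) ∘L Q = 1 →
      ‖((α : ℂ) • (1 : H →L[ℂ] H) + B) ∘L Q ∘L P‖ ≤
        1 + (Real.sqrt 3 / 2) * Real.sqrt c := by
  rw [← nonneg_iff_isPositive] at hA hB
  have hA_pos := isStrictlyPositive_smul_one_add hα hA
  simp only [Complex.coe_smul] at hyp1 hyp2 ⊢
  obtain ⟨isUnit_compression, norm_le⟩ := stmt_18_general hA hB ⟨hP_idem, hP_sa⟩ hα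
    (hyp1 _ ((nonneg_iff_isPositive _).1 (CFC.sqrt_nonneg _))
      (CFC.sqrt_mul_sqrt_self _ hA_pos.nonneg))
    (hyp2 _ (Ring.inverse_mul_cancel _ hA_pos.isUnit) (Ring.mul_inverse_cancel _ hA_pos.isUnit))
  refine ⟨isUnit_compression, fun Q hQ _ => ?_⟩
  obtain rfl := left_inv_eq_right_inv hQ (Ring.mul_inverse_cancel _ isUnit_compression)
  rwa [Real.sqrt_mul zero_le_three, mul_div_right_comm] at norm_le
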